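/- Let r ≥ 1, g ≥ 1, δ ≥ 1 and m ≥ 1 be integers with δ dividing 2g − 2. Let Λ = ℤ^r with standard basis e₁, …, e_r and set d = m·e₁ ∈ Λ. Let Bil^s(Λ) denote the abelian group of symmetric ℤ-bilinear forms on Λ, and let ∂ : Bil^s(Λ) → Hom(Λ, ℤ/δℤ) be the homomorphism sending b to the homomorphism x ↦ [b(d, x) + (1 − g)·b(x, x)] (this is well defined since δ ∣ 2g − 2). Then the cokernel of ∂ is isomorphic, as an abelian group, to (ℤ/gcd(δ, m + 1 − g)ℤ) ⊕ (ℤ/gcd(δ, g − 1, m)ℤ)^{⊕(r−1)}. -/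

import Mathlib

/-- The abelian group of symmetric `ℤ`-bilinear forms on `ℤ^r`. -/
def symmBil (r : ℕ) : AddSubgroup ((Fin r → ℤ) →ₗ[ℤ] (Fin r → ℤ) →ₗ[ℤ] ℤ) where
  carrier := {b | ∀ x y, b x y = b y x}
  zero_mem' := by intro x y; simp
  add_mem' := by
    intro a b ha hb x y
    simp only [LinearMap.add_apply]
    rw [ha x y, hb x y]
  neg_mem' := by
    intro a ha x y
    simp only [LinearMap.neg_apply]
    rw [ha x y]

theorem zmod_cast_eq_zero_two (δ k : ℕ) (h : k ∣ δ) (u v : ℤ)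
    (hk : ∀ z : ℤ, (k : ℤ) ∣ z → ∃ s t w : ℤ, z = δ * s + u * t + v * w) (x : ZMod δ)
    (hx : ZMod.castHom h (ZMod k) x = 0) :
    ∃ t w : ℤ, x = ((u * t + v * w : ℤ) : ZMod δ) := by
  obtain ⟨z, rfl⟩ := ZMod.intCast_surjective x
  rw [map_intCast, ZMod.intCast_zmod_eq_zero_iff_dvd] at hx
  obtain ⟨s, t, w, e⟩ := hk z hx
  refine ⟨t, w, ?_⟩
  rw [e]
  push_cast
  simp

/-- The symmetric form with prescribed entries in the first row and on the diagonal. -/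
def formOf (n : ℕ) (a : ℤ) (p q : Fin n → ℤ) :
    (Fin (n + 1) → ℤ) →ₗ[ℤ] (Fin (n + 1) → ℤ) →ₗ[ℤ] ℤ :=
  LinearMap.mk₂ ℤ (fun x y => a * (x 0 * y 0) +
      ∑ i : Fin n, (p i * (x 0 * y i.succ + x i.succ * y 0) + q i * (x i.succ * y i.succ)))
    (by
      intro x x' y
      simp only [Pi.add_apply]
      rw [add_add_add_comm, ← Finset.sum_add_distrib]
      congr 1
      · ring
      · exact Finset.sum_congr rfl fun i _ => by ring)
    (by
      intro c x y
      simp only [Pi.smul_apply, smul_eq_mul]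
      rw [mul_add, Finset.mul_sum]
      congr 1
      · ring
      · exact Finset.sum_congr rfl fun i _ => by ring)
    (by
      intro x y y'
      simp only [Pi.add_apply]
      rw [add_add_add_comm, ← Finset.sum_add_distrib]
      congr 1
      · ring
      · exact Finset.sum_congr rfl fun i _ => by ring)
    (by
      intro c x y
      simp only [Pi.smul_apply, smul_eq_mul]
      rw [mul_add, Finset.mul_sum]
      congr 1
      · ring
      · exact Finset.sum_congr rfl fun i _ => by ring)

theorem formOf_apply (n : ℕ) (a : ℤ) (p q : Fin n → ℤ) (x y : Fin (n + 1) → ℤ) :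
    formOf n a p q x y = a * (x 0 * y 0) +
      ∑ i : Fin n, (p i * (x 0 * y i.succ + x i.succ * y 0) + q i * (x i.succ * y i.succ)) := rfl

/-- Evaluation on the standard basis followed by reduction. -/
def redHom (n δ k l : ℕ) (hk : k ∣ δ) (hl : l ∣ δ) :
    ((Fin (n + 1) → ℤ) →+ ZMod δ) →+ (ZMod k × (Fin n → ZMod l)) where
  toFun f := (ZMod.castHom hk (ZMod k) (f (Pi.single 0 1)),
    fun i => ZMod.castHom hl (ZMod l) (f (Pi.single i.succ 1)))
  map_zero' := by
    ext <;> simp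
  map_add' f f' := by
    ext <;> simp [-ZMod.castHom_apply]

theorem redHom_surjective (n δ k l : ℕ) (hk : k ∣ δ) (hl : l ∣ δ) :
    Function.Surjective (redHom n δ k l hk hl) := by
  rintro ⟨a, c⟩
  obtain ⟨a, rfl⟩ := ZMod.intCast_surjective a
  choose c' hc using fun i => ZMod.intCast_surjective (c i)
  refine ⟨(Int.castAddHom (ZMod δ)).comp
    { toFun := fun x => a * x 0 + ∑ i : Fin n, c' i * x i.succ
      map_zero' := by simp
      map_add' := fun x y => by
        simp only [Pi.add_apply]
        rw [add_add_add_comm, ← Finset.sum_add_distrib]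
        congr 1
        · ring
        · exact Finset.sum_congr rfl fun i _ => by ring }, ?_⟩
  ext i
  · simp [redHom, -ZMod.castHom_apply]
  · simp [redHom, Pi.single_apply, hc, -ZMod.castHom_apply]

/-- Corollary 4.5(2): the cokernel of the boundary homomorphism
`∂ : Bil^s(ℤ^r) → Hom(ℤ^r, ℤ/δℤ)`, `b ↦ (x ↦ [b(d,x) + (1-g)·b(x,x)])` with
`d = m·e₁`, is isomorphic to
`ℤ/gcd(δ, m+1-g)ℤ ⊕ (ℤ/gcd(δ, g-1, m)ℤ)^{⊕(r-1)}`. -/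
theorem coker_boundary_iso
    (r g δ m : ℕ) (hr : 1 ≤ r) (hg : 1 ≤ g) (hδ : 1 ≤ δ) (hm : 1 ≤ m)
    (hdvd : (δ : ℤ) ∣ 2 * g - 2)
    (d : Fin r → ℤ) (hd : d = fun i => if i.val = 0 then (m : ℤ) else 0)
    (bdry : symmBil r →+ ((Fin r → ℤ) →+ ZMod δ))
    (hbdry : ∀ (b : symmBil r) (x : Fin r → ℤ),
        bdry b x = ((b.val d x + (1 - (g : ℤ)) * b.val x x : ℤ) : ZMod δ)) :
    Nonempty ((((Fin r → ℤ) →+ ZMod δ) ⧸ bdry.range) ≃+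
      (ZMod (Int.gcd δ ((m : ℤ) + 1 - g)) ×
        (Fin (r - 1) → ZMod (Nat.gcd δ (Nat.gcd (g - 1) m))))) := by
  obtain ⟨n, rfl⟩ : ∃ n, r = n + 1 := ⟨r - 1, by omega⟩
  have hd' : d = (m : ℤ) • Pi.single 0 1 := by
    rw [hd]
    funext i
    simp only [Pi.smul_apply, Pi.single_apply, smul_eq_mul, Fin.ext_iff, Fin.val_zero]
    split_ifs <;> simp
  have hk : Int.gcd δ ((m : ℤ) + 1 - g) ∣ δ := by
    exact_mod_cast Int.gcd_dvd_left (δ : ℤ) ((m : ℤ) + 1 - g)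
  have hl : Nat.gcd δ (Nat.gcd (g - 1) m) ∣ δ := Nat.gcd_dvd_left _ _
  have hgc : ((g - 1 : ℕ) : ℤ) = (g : ℤ) - 1 := by omega
  have key : bdry.range = (redHom n δ _ _ hk hl).ker := by
    apply le_antisymm
    · rintro _ ⟨b, rfl⟩
      rw [AddMonoidHom.mem_ker]
      ext i
      · simp only [redHom, AddMonoidHom.coe_mk, ZeroHom.coe_mk, Prod.fst_zero]
        rw [hbdry, map_intCast, ZMod.intCast_zmod_eq_zero_iff_dvd, hd', map_smul,
          LinearMap.smul_apply, smul_eq_mul, ← add_mul]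
        apply Dvd.dvd.mul_right
        rw [← add_sub_assoc]
        exact Int.gcd_dvd_right _ _
      · simp only [redHom, AddMonoidHom.coe_mk, ZeroHom.coe_mk, Prod.snd_zero, Pi.zero_apply]
        rw [hbdry, map_intCast, ZMod.intCast_zmod_eq_zero_iff_dvd, hd', map_smul,
          LinearMap.smul_apply, smul_eq_mul]
        have h1 : ((Nat.gcd δ (Nat.gcd (g - 1) m) : ℕ) : ℤ) ∣ (m : ℤ) :=
          Int.natCast_dvd_natCast.2 ((Nat.gcd_dvd_right _ _).trans (Nat.gcd_dvd_right _ _))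
        have h2 : ((Nat.gcd δ (Nat.gcd (g - 1) m) : ℕ) : ℤ) ∣ (1 - (g : ℤ)) := by
          have : ((Nat.gcd δ (Nat.gcd (g - 1) m) : ℕ) : ℤ) ∣ ((g - 1 : ℕ) : ℤ) :=
            Int.natCast_dvd_natCast.2 ((Nat.gcd_dvd_right _ _).trans (Nat.gcd_dvd_left _ _))
          rw [hgc] at this
          rw [← dvd_neg, neg_sub]
          exact this
        exact dvd_add (h1.mul_right _) (h2.mul_right _)
    · intro f hf
      rw [AddMonoidHom.mem_ker] at hf
      have hf1 := congrArg Prod.fst hf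
      have hf2 := fun i => congrFun (congrArg Prod.snd hf) i
      simp only [redHom, AddMonoidHom.coe_mk, ZeroHom.coe_mk, Prod.fst_zero, Prod.snd_zero,
        Pi.zero_apply] at hf1 hf2
      obtain ⟨a, a', ha⟩ := zmod_cast_eq_zero_two δ _ hk ((m : ℤ) + 1 - g) 0 (by
        rintro z ⟨c, rfl⟩
        refine ⟨Int.gcdA δ ((m : ℤ) + 1 - g) * c, Int.gcdB δ ((m : ℤ) + 1 - g) * c, 0, ?_⟩
        rw [Int.gcd_eq_gcd_ab]
        ring) _ hf1
      have hq := fun i => zmod_cast_eq_zero_two δ _ hl (m : ℤ) (1 - (g : ℤ)) (by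
        rintro z ⟨c, rfl⟩
        refine ⟨Nat.gcdA δ (Nat.gcd (g - 1) m) * c,
          Nat.gcdB (g - 1) m * Nat.gcdB δ (Nat.gcd (g - 1) m) * c,
          - (Nat.gcdA (g - 1) m * Nat.gcdB δ (Nat.gcd (g - 1) m) * c), ?_⟩
        have e := Nat.gcd_eq_gcd_ab (g - 1) m
        rw [Nat.gcd_eq_gcd_ab δ]
        generalize Nat.gcdA δ (Nat.gcd (g - 1) m) = A
        generalize Nat.gcdB δ (Nat.gcd (g - 1) m) = B
        rw [e, hgc]
        ring) _ (hf2 i)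
      choose p q hpq using hq
      refine ⟨⟨formOf n a p q, ?_⟩, ?_⟩
      · intro x y
        rw [formOf_apply, formOf_apply]
        congr 1
        · ring
        · exact Finset.sum_congr rfl fun i _ => by ring
      · have : ∀ i, bdry ⟨formOf n a p q, by
            intro x y
            rw [formOf_apply, formOf_apply]
            congr 1
            · ring
            · exact Finset.sum_congr rfl fun i _ => by ring⟩ (Pi.single i 1)
              = f (Pi.single i 1) := by
          intro i
          rw [hbdry, hd', map_smul, LinearMap.smul_apply, smul_eq_mul]
          refine Fin.cases ?_ (fun j => ?_) i
          · rw [ha]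
            congr 1
            simp only [formOf_apply]
            simp
            ring
          · rw [hpq]
            congr 1
            simp only [formOf_apply]
            simp [Pi.single_apply]
        apply AddMonoidHom.functions_ext'
        intro i
        ext
        simpa using this i
  exact ⟨(QuotientAddGroup.quotientAddEquivOfEq key).trans
    (QuotientAddGroup.quotientKerEquivOfSurjective _ (redHom_surjective n δ _ _ hk hl))⟩
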